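/- In any quantum-Wajsberg algebra X, the identity x→(x∧y) = x→y holds for all x, y ∈ X (property (QW1)). -/

import Mathlib

/-!
Since `1 ∧ a = a = a ∧ 1`, the axiom at `y = 1` reads `x → (x ∧ (z ∧ x)) = x → z`. In any
involutive BE algebra `z ∧ x ≤ x`, and `v ≤ x` forces `x ∧ v = v`, so this becomes
`x → (z ∧ x) = x → z`. The axiom at `z = 1` reads `x → ((x ∧ y) ∧ x) = x → y`, whose left side
is `x → (x ∧ y)` by the previous identity applied to `x ∧ y`.
-/

/-- A bounded involutive BE algebra. -/
class InvBE (X : Type*) where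
  imp : X → X → X
  one : X
  zero : X
  be1 : ∀ x : X, imp x x = one
  be2 : ∀ x : X, imp x one = one
  be3 : ∀ x : X, imp one x = x
  be4 : ∀ x y z : X, imp x (imp y z) = imp y (imp x z)
  bound : ∀ x : X, imp zero x = one
  dn : ∀ x : X, imp (imp x zero) zero = x

namespace InvBE

variable {X : Type*} [InvBE X]

/-- Negation: `x* = x → 0`. -/
def neg (x : X) : X := imp x zero

/-- `x ∨ y = (x → y) → y`. -/
def sup (x y : X) : X := imp (imp x y) y

/-- `x ∧ y = ((x* → y*) → y*)*`. -/
def inf (x y : X) : X := neg (imp (imp (neg x) (neg y)) (neg y))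

/-- `x ≤ y` iff `x → y = 1`. -/
def le (x y : X) : Prop := imp x y = one

/-- `x ≤_Q y` iff `x = x ∧ y`. -/
def leQ (x y : X) : Prop := x = inf x y

end InvBE

namespace InvBE

variable {X : Type*} [InvBE X]

theorem neg_neg' (x : X) : neg (neg x) = x := dn x

theorem imp_neg_comm (x y : X) : imp x (neg y) = imp y (neg x) := be4 x y zero

theorem neg_imp_neg (x y : X) : imp (neg x) (neg y) = imp y x := by
  rw [imp_neg_comm, neg_neg']

theorem inf_eq_right_of_le {x y : X} (h : le y x) : inf x y = y := by
  unfold le at h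
  rw [inf, neg_imp_neg, h, be3, neg_neg']

theorem one_inf (x : X) : inf one x = x := inf_eq_right_of_le (be2 x)

theorem inf_one (x : X) : inf x one = x := by
  have h : neg (one : X) = zero := be3 zero
  rw [inf, h]
  change neg (neg (neg (neg x))) = x
  rw [neg_neg', neg_neg']

theorem inf_le_right (x y : X) : le (inf x y) y := by
  unfold le
  rw [← neg_imp_neg, inf, neg_neg', be4, be1, be2]

end InvBE

open InvBE in
theorem stmt_2 {X : Type*} [InvBE X]
    (qw : ∀ x y z : X, imp x (inf (inf x y) (inf z x)) = inf (imp x y) (imp x z)) :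
    ∀ x y : X, imp x (inf x y) = imp x y := by
  have key : ∀ x z : X, imp x (inf z x) = imp x z := by
    intro x z
    have h := qw x one z
    rwa [inf_one, inf_eq_right_of_le (inf_le_right z x), be2, one_inf] at h
  intro x y
  have h := qw x y one
  rwa [one_inf, be2, inf_one, key] at h
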